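/- Let y ∈ V^n be a probability vector with positive components. The following three statements are equivalent: (1) T(y) = S(y); (2) M(y) = S(y); (3) for every d with 1 < d < n−1, either y_d = y_1 or y_{d+1} = y_n. -/

import Mathlib

noncomputable section

/-- `eSum x l` : the sum of the `l` largest components of `x`. -/
def eSum {n : ℕ} (x : Fin n → ℝ) (l : ℕ) : ℝ :=
  sSup {r | ∃ s : Finset (Fin n), s.card = l ∧ r = ∑ i ∈ s, x i}

/-- `ESum x l` : the sum of the `l` smallest components of `x`. -/
def ESum {n : ℕ} (x : Fin n → ℝ) (l : ℕ) : ℝ :=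
  sInf {r | ∃ s : Finset (Fin n), s.card = l ∧ r = ∑ i ∈ s, x i}

/-- Majorization `x ≺ y` (for vectors with equal total sum):
`e_l(x) ≤ e_l(y)` for all `1 ≤ l ≤ n`. -/
def Maj {n : ℕ} (x y : Fin n → ℝ) : Prop :=
  (∑ i, x i) = (∑ i, y i) ∧ ∀ l : ℕ, 1 ≤ l → l ≤ n → eSum x l ≤ eSum y l

/-- Strict majorization `x ◁ y`: equal total sums and `e_l(x) < e_l(y)` for all
`1 ≤ l ≤ n - 1`. -/
def SMaj {n : ℕ} (x y : Fin n → ℝ) : Prop :=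
  (∑ i, x i) = (∑ i, y i) ∧ ∀ l : ℕ, 1 ≤ l → l + 1 ≤ n → eSum x l < eSum y l

/-- Super-majorization `x ≺ʷ y` : `E_l(x) ≥ E_l(y)` for all `1 ≤ l ≤ n`. -/
def SupMaj {n : ℕ} (x y : Fin n → ℝ) : Prop :=
  ∀ l : ℕ, 1 ≤ l → l ≤ n → ESum y l ≤ ESum x l

/-- Strict super-majorization `x ◁ʷ y` : `E_l(x) > E_l(y)` for all `1 ≤ l ≤ n`. -/
def SSupMaj {n : ℕ} (x y : Fin n → ℝ) : Prop :=
  ∀ l : ℕ, 1 ≤ l → l ≤ n → ESum y l < ESum x l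

/-- Tensor product of two vectors: the vector of all pairwise products. -/
def tensor {m k : ℕ} (x : Fin m → ℝ) (c : Fin k → ℝ) : Fin (m * k) → ℝ :=
  fun i => x (finProdFinEquiv.symm i).1 * c (finProdFinEquiv.symm i).2

/-- `k`-fold tensor power of a vector. -/
def tpow {n : ℕ} (x : Fin n → ℝ) (k : ℕ) : Fin (n ^ k) → ℝ :=
  fun i => ∏ j : Fin k, x (finFunctionFinEquiv.symm i j)

/-- `V^n` : probability vectors with components in non-increasing order. -/
def Vn (n : ℕ) : Set (Fin n → ℝ) :=
  {x | (∀ i, 0 ≤ x i) ∧ (∑ i, x i) = 1 ∧ Antitone x}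

/-- `S(y)` : members of `V^n` majorized by `y`. -/
def Sset {n : ℕ} (y : Fin n → ℝ) : Set (Fin n → ℝ) :=
  {x ∈ Vn n | Maj x y}

/-- `T(y,c)` : members of `V^n` with `x ⊗ c ≺ y ⊗ c`. -/
def Tcat {n k : ℕ} (y : Fin n → ℝ) (c : Fin k → ℝ) : Set (Fin n → ℝ) :=
  {x ∈ Vn n | Maj (tensor x c) (tensor y c)}

/-- Local uniformity `l_u(c)` : the minimum of the consecutive ratios `c_{i+1}/c_i`. -/
def lu {k : ℕ} (c : Fin k → ℝ) : ℝ :=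
  sInf {r | ∃ i : ℕ, ∃ h : i + 1 < k, r = c ⟨i + 1, h⟩ / c ⟨i, Nat.lt_of_succ_lt h⟩}

/-- Global uniformity `g_u(c) = c_k / c_1` (smallest over largest component of a
non-increasingly ordered vector). -/
def gu {k : ℕ} (c : Fin k → ℝ) : ℝ :=
  if h : 0 < k then c ⟨k - 1, Nat.sub_lt h Nat.one_pos⟩ / c ⟨0, h⟩ else 1

/-- Largest component. -/
def maxc {n : ℕ} (x : Fin n → ℝ) : ℝ := sSup (Set.range x)

/-- Smallest component. -/
def minc {n : ℕ} (x : Fin n → ℝ) : ℝ := sInf (Set.range x)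

/-- `c'` is a (contiguous) segment of `c`. -/
def IsSegment {j k : ℕ} (c' : Fin j → ℝ) (c : Fin k → ℝ) : Prop :=
  ∃ (i : ℕ) (_h : i + j ≤ k), ∀ t : Fin j, c' t = c ⟨i + t, by have := t.isLt; omega⟩

/-- The first `d` components of a vector. -/
def take {n : ℕ} (x : Fin n → ℝ) (d : ℕ) (h : d ≤ n) : Fin d → ℝ :=
  fun i => x ⟨i, Nat.lt_of_lt_of_le i.isLt h⟩

/-- The components of a vector after the first `d` ones. -/
def drop {n : ℕ} (x : Fin n → ℝ) (d : ℕ) : Fin (n - d) → ℝ :=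
  fun i => x ⟨d + i, by have := i.isLt; omega⟩

/-- The segment `(c_i, …, c_j)` of `c` (`0`-based indices). -/
def seg {k : ℕ} (c : Fin k → ℝ) (i j : ℕ) (hij : i ≤ j) (hj : j < k) :
    Fin (j - i + 1) → ℝ :=
  fun t => c ⟨i + t, by have := t.isLt; omega⟩

/-- `(c_i, …, c_j)` is a block of the decomposition `[c]_α` of the (positive,
non-increasingly ordered) vector `c` according to `α`: ratios within the block
exceed `α`, and the ratios at the two boundaries of the block are `≤ α`
(or the block touches an end of `c`). -/
def IsBlock {k : ℕ} (α : ℝ) (c : Fin k → ℝ) (i j : ℕ) : Prop :=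
  ∃ (hij : i ≤ j) (hj : j < k),
    (i = 0 ∨ c ⟨i, by omega⟩ / c ⟨i - 1, by omega⟩ ≤ α) ∧
    (j = k - 1 ∨ ∃ hj1 : j + 1 < k, c ⟨j + 1, hj1⟩ / c ⟨j, hj⟩ ≤ α) ∧
    (∀ (t : ℕ) (ht1 : i ≤ t) (ht2 : t < j), α < c ⟨t + 1, by omega⟩ / c ⟨t, by omega⟩)

/-- `T_k(y)` : states transformable to `y` with a `k`-dimensional catalyst. -/
def Tk {n : ℕ} (k : ℕ) (y : Fin n → ℝ) : Set (Fin n → ℝ) :=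
  {x ∈ Vn n | ∃ c : Fin k → ℝ, (∀ i, 0 < c i) ∧ (∑ i, c i) = 1 ∧ Antitone c ∧
    Maj (tensor x c) (tensor y c)}

/-- `M_k(y)` : states `x` with `x^{⊗k} ≺ y^{⊗k}`. -/
def Mk {n : ℕ} (k : ℕ) (y : Fin n → ℝ) : Set (Fin n → ℝ) :=
  {x ∈ Vn n | Maj (tpow x k) (tpow y k)}

/-- `T(y)` : states transformable to `y` with some catalyst. -/
def Tinf {n : ℕ} (y : Fin n → ℝ) : Set (Fin n → ℝ) :=
  {x ∈ Vn n | ∃ (k : ℕ) (c : Fin k → ℝ), 0 < k ∧ (∀ i, 0 < c i) ∧ (∑ i, c i) = 1 ∧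
    Antitone c ∧ Maj (tensor x c) (tensor y c)}

/-- `M(y)` : states `x` with `x^{⊗k} ≺ y^{⊗k}` for some `k ≥ 1`. -/
def Minf {n : ℕ} (y : Fin n → ℝ) : Set (Fin n → ℝ) :=
  {x ∈ Vn n | ∃ k : ℕ, 1 ≤ k ∧ Maj (tpow x k) (tpow y k)}

/-- `S^λ(y)` : states `x` with `x ≺ʷ λ y`. -/
def Slam {n : ℕ} (lam : ℝ) (y : Fin n → ℝ) : Set (Fin n → ℝ) :=
  {x ∈ Vn n | SupMaj x (fun i => lam * y i)}

/-- `T^λ(y,c)` : states `x` with `x ⊗ c ≺ʷ λ (y ⊗ c)`. -/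
def Tlamc {n k : ℕ} (lam : ℝ) (y : Fin n → ℝ) (c : Fin k → ℝ) : Set (Fin n → ℝ) :=
  {x ∈ Vn n | SupMaj (tensor x c) (fun i => lam * tensor y c i)}

/-- `T_k^λ(y)`. -/
def Tklam {n : ℕ} (k : ℕ) (lam : ℝ) (y : Fin n → ℝ) : Set (Fin n → ℝ) :=
  {x ∈ Vn n | ∃ c : Fin k → ℝ, (∀ i, 0 < c i) ∧ (∑ i, c i) = 1 ∧ Antitone c ∧
    SupMaj (tensor x c) (fun i => lam * tensor y c i)}

/-- `M_k^λ(y)`. -/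
def Mklam {n : ℕ} (k : ℕ) (lam : ℝ) (y : Fin n → ℝ) : Set (Fin n → ℝ) :=
  {x ∈ Vn n | SupMaj (tpow x k) (fun i => lam ^ k * tpow y k i)}

/-- `T^λ(y)`. -/
def Tlaminf {n : ℕ} (lam : ℝ) (y : Fin n → ℝ) : Set (Fin n → ℝ) :=
  {x ∈ Vn n | ∃ (k : ℕ) (c : Fin k → ℝ), 0 < k ∧ (∀ i, 0 < c i) ∧ (∑ i, c i) = 1 ∧
    Antitone c ∧ SupMaj (tensor x c) (fun i => lam * tensor y c i)}

/-- `M^λ(y)`. -/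
def Mlaminf {n : ℕ} (lam : ℝ) (y : Fin n → ℝ) : Set (Fin n → ℝ) :=
  {x ∈ Vn n | ∃ k : ℕ, 1 ≤ k ∧ SupMaj (tpow x k) (fun i => lam ^ k * tpow y k i)}

/-- `K_d(y)` : concatenations `x = x' ⊕ x''` with `x' ◁ y'` and `x'' ◁ y''`,
where `y'` is the first-`d` part of `y` and `y''` the rest. -/
def Kd {n : ℕ} (y : Fin n → ℝ) (d : ℕ) (h : d ≤ n) : Set (Fin n → ℝ) :=
  {x ∈ Vn n | SMaj (take x d h) (take y d h) ∧ SMaj (drop x d) (drop y d)}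

/-- `y(d)` : first `d` components equal to `e_d(y)/d`, the last `n-d` equal to
`(1 - e_d(y))/(n-d)`. -/
def yvec {n : ℕ} (y : Fin n → ℝ) (d : ℕ) : Fin n → ℝ :=
  fun i => if (i : ℕ) < d then eSum y d / d else (1 - eSum y d) / (n - d)

/-- `K_d^λ(y)` : states `x ∈ S^λ(y)` with `E_l(x) = λ E_l(y)` iff `l = n - d`. -/
def Kdlam {n : ℕ} (lam : ℝ) (y : Fin n → ℝ) (d : ℕ) : Set (Fin n → ℝ) :=
  {x ∈ Vn n | SupMaj x (fun i => lam * y i) ∧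
    ∀ l : ℕ, 1 ≤ l → l ≤ n → (ESum x l = lam * ESum y l ↔ l = n - d)}

/-!
Catalysis and multiple copies both keep every component of `x` between the smallest and the largest
component of `y`; if every inner cut of `y` has a constant side, these bounds alone force `x ≺ y`.

Otherwise some cut `d` separates two non-constant parts. Averaging `y` over its first `d` and its
last `n - d` components leaves `e_d` unchanged. For a suitable geometric catalyst `c`, or a large
number of copies, the ranges of the averaged groups in `y ⊗ c` overlap consecutively, so that
averaging strictly decreases `∑ i, (· - t)⁺` for every `t` strictly between the extreme components.
This strictness survives small perturbations, for instance moving a little mass from the last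
component of the average to the first, which raises `e_d` above that of `y`.
-/

open Filter Topology
open Set (Icc Ioo)

section LargestSums

variable {n l : ℕ} {x y : Fin n → ℝ}

lemma sum_le_eSum (x : Fin n → ℝ) (s : Finset (Fin n)) : ∑ i ∈ s, x i ≤ eSum x s.card := by
  refine le_csSup ((Set.finite_range fun s : Finset (Fin n) => ∑ i ∈ s, x i).subset ?_).bddAbove
    ⟨s, rfl, rfl⟩
  rintro _ ⟨s', -, rfl⟩
  exact ⟨s', rfl⟩

lemma eSum_le {C : ℝ} (hl : l ≤ n) (h : ∀ s : Finset (Fin n), s.card = l → ∑ i ∈ s, x i ≤ C) :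
    eSum x l ≤ C := by
  obtain ⟨s, -, hs⟩ := Finset.exists_subset_card_eq (s := (Finset.univ : Finset (Fin n)))
    (n := l) (by simpa using hl)
  refine csSup_le ⟨_, s, hs, rfl⟩ ?_
  rintro _ ⟨s', hs', rfl⟩
  exact h s' hs'

lemma eSum_zero (x : Fin n → ℝ) : eSum x 0 = 0 := by
  simp [eSum]

lemma eSum_smul {a : ℝ} (ha : 0 ≤ a) (x : Fin n → ℝ) (l : ℕ) : eSum (a • x) l = a * eSum x l := by
  rw [eSum, eSum, ← smul_eq_mul a, ← Real.sSup_smul_of_nonneg ha]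
  congr 1
  ext r
  simp only [Set.mem_smul_set, Set.mem_ofPred_eq, Pi.smul_apply, ← Finset.smul_sum]
  constructor
  · rintro ⟨s, hs, rfl⟩
    exact ⟨_, ⟨s, hs, rfl⟩, rfl⟩
  · rintro ⟨_, ⟨s, hs, rfl⟩, rfl⟩
    exact ⟨s, hs, rfl⟩

lemma eSum_comp_equiv {m : ℕ} (e : Fin m ≃ Fin n) (x : Fin n → ℝ) (l : ℕ) :
    eSum (x ∘ e) l = eSum x l := by
  unfold eSum
  congr! 3 with r
  exact e.finsetCongr.exists_congr fun s => by simp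

lemma eSum_le_mul {M : ℝ} (hl : l ≤ n) (hx : ∀ i, x i ≤ M) : eSum x l ≤ l * M :=
  eSum_le hl fun s hs => by
    simpa [hs] using Finset.sum_le_card_nsmul s x M fun i _ => hx i

lemma eSum_le_sum_sub {m : ℝ} (hl : l ≤ n) (hx : ∀ i, m ≤ x i) :
    eSum x l ≤ ∑ i, x i - (n - l : ℕ) * m := by
  refine eSum_le hl fun s hs => ?_
  have hcompl : (n - l : ℕ) * m ≤ ∑ i ∈ sᶜ, x i := by
    simpa [Finset.card_compl, hs] using Finset.card_nsmul_le_sum sᶜ x m fun i _ => hx i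
  linarith [Finset.sum_add_sum_compl s x]

lemma sum_le_card_mul_add_sum_posPart (x : Fin n → ℝ) (s : Finset (Fin n)) (t : ℝ) :
    ∑ i ∈ s, x i ≤ s.card * t + ∑ i, (x i - t)⁺ :=
  calc ∑ i ∈ s, x i = s.card * t + ∑ i ∈ s, (x i - t) := by simp
    _ ≤ s.card * t + ∑ i ∈ s, (x i - t)⁺ := by
      gcongr with i
      exact le_posPart (x i - t)
    _ ≤ s.card * t + ∑ i, (x i - t)⁺ := by
      gcongr
      exact Finset.subset_univ s

lemma eSum_le_mul_add_sum_posPart (hl : l ≤ n) (t : ℝ) :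
    eSum x l ≤ l * t + ∑ i, (x i - t)⁺ :=
  eSum_le hl fun s hs => hs ▸ sum_le_card_mul_add_sum_posPart x s t

lemma sum_eq_card_mul_add_sum_posPart {s : Finset (Fin n)} {t : ℝ} (hs : ∀ i ∈ s, t ≤ x i)
    (hsc : ∀ i ∉ s, x i ≤ t) : ∑ i ∈ s, x i = s.card * t + ∑ i, (x i - t)⁺ := by
  have hsum : ∑ i, (x i - t)⁺ = ∑ i ∈ s, (x i - t) := by
    rw [← Finset.sum_subset (Finset.subset_univ s) fun i _ hi =>
      posPart_eq_zero.2 (sub_nonpos.2 (hsc i hi))]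
    exact Finset.sum_congr rfl fun i hi => posPart_eq_self.2 (sub_nonneg.2 (hs i hi))
  simp [hsum]

lemma sum_eq_eSum_of_le_of_le {s : Finset (Fin n)} {t : ℝ} (hs : ∀ i ∈ s, t ≤ x i)
    (hsc : ∀ i ∉ s, x i ≤ t) : ∑ i ∈ s, x i = eSum x s.card := by
  refine (sum_le_eSum x s).antisymm ?_
  rw [sum_eq_card_mul_add_sum_posPart hs hsc]
  exact eSum_le_mul_add_sum_posPart (by simpa using s.card_le_univ) t

/-- The set of the first `d` indices of a vector of length `n`. -/
def initialIndices (n d : ℕ) : Finset (Fin n) := {i | (i : ℕ) < d}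

lemma mem_initialIndices {d : ℕ} {i : Fin n} : i ∈ initialIndices n d ↔ (i : ℕ) < d := by
  simp [initialIndices]

lemma card_initialIndices {d : ℕ} (hdn : d ≤ n) : (initialIndices n d).card = d := by
  simpa [initialIndices, hdn] using Fin.card_filter_val_lt (n := n) (m := d)

lemma sum_initialIndices_eq_eSum {d : ℕ} (hx : Antitone x) (hd : 0 < d) (hdn : d ≤ n) :
    ∑ i ∈ initialIndices n d, x i = eSum x d := by
  conv_rhs => rw [← card_initialIndices hdn]
  refine sum_eq_eSum_of_le_of_le (t := x ⟨d - 1, by omega⟩) (fun i hi => hx ?_) (fun i hi => hx ?_)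
  all_goals
    simp only [mem_initialIndices, Fin.le_def] at hi ⊢
    omega

lemma exists_card_eq_of_le_of_le (hl : 0 < l) (hln : l ≤ n) (x : Fin n → ℝ) :
    ∃ (s : Finset (Fin n)) (j : Fin n),
      s.card = l ∧ (∀ i ∈ s, x j ≤ x i) ∧ ∀ i ∉ s, x i ≤ x j := by
  obtain ⟨s, hs, hmax⟩ := Finset.exists_max_image
    (Finset.powersetCard l (Finset.univ : Finset (Fin n))) (fun s => ∑ i ∈ s, x i)
    (Finset.powersetCard_nonempty.2 (by simpa using hln))
  rw [Finset.mem_powersetCard_univ] at hs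
  obtain ⟨j, hj, hmin⟩ := Finset.exists_min_image s x (Finset.card_pos.1 (by omega))
  refine ⟨s, j, hs, hmin, fun i hi => ?_⟩
  have hi' : i ∉ s.erase j := fun h => hi (Finset.mem_of_mem_erase h)
  -- Exchanging `j` for `i` cannot increase the maximal sum.
  have hexchange : x i + ∑ k ∈ s.erase j, x k ≤ ∑ k ∈ s, x k := by
    rw [← Finset.sum_insert hi']
    refine hmax _ (Finset.mem_powersetCard_univ.2 ?_)
    rw [Finset.card_insert_of_notMem hi', Finset.card_erase_add_one hj, hs]
  linarith [Finset.add_sum_erase s x hj]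

end LargestSums

section Majorization

variable {n : ℕ} {x y : Fin n → ℝ}

lemma maj_of_sum_posPart_le (hsum : ∑ i, x i = ∑ i, y i)
    (h : ∀ j, ∑ i, (x i - y j)⁺ ≤ ∑ i, (y i - y j)⁺) : Maj x y := by
  refine ⟨hsum, fun l hl hln => ?_⟩
  obtain ⟨s, j, rfl, hs, hsc⟩ := exists_card_eq_of_le_of_le hl hln y
  calc eSum x s.card ≤ s.card * y j + ∑ i, (x i - y j)⁺ := eSum_le_mul_add_sum_posPart hln _
    _ ≤ s.card * y j + ∑ i, (y i - y j)⁺ := by gcongr s.card * y j + ?_; exact h j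
    _ = ∑ i ∈ s, y i := (sum_eq_card_mul_add_sum_posPart hs hsc).symm
    _ ≤ eSum y s.card := sum_le_eSum y s

lemma Maj.comp_equiv {m : ℕ} (h : Maj x y) (e : Fin m ≃ Fin n) : Maj (x ∘ e) (y ∘ e) := by
  obtain rfl : m = n := by simpa using Fintype.card_congr e
  refine ⟨by simpa [Equiv.sum_comp] using h.1, fun l hl hln => ?_⟩
  simpa only [eSum_comp_equiv] using h.2 l hl hln

lemma Maj.smul {a : ℝ} (ha : 0 ≤ a) (h : Maj x y) : Maj (a • x) (a • y) := by
  refine ⟨by simp [← Finset.mul_sum, h.1], fun l hl hln => ?_⟩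
  simpa only [eSum_smul ha] using mul_le_mul_of_nonneg_left (h.2 l hl hln) ha

lemma Maj.eSum_le_eSum {l : ℕ} (h : Maj x y) (hl : l ≤ n) : eSum x l ≤ eSum y l := by
  rcases Nat.eq_zero_or_pos l with rfl | hpos
  · simp only [eSum_zero, le_refl]
  · exact h.2 l hpos hl

lemma Maj.mem_Icc {m M : ℝ} (h : Maj x y) (hy : ∀ i, y i ∈ Icc m M) (i : Fin n) :
    x i ∈ Icc m M := by
  have hn : 1 ≤ n := i.pos
  constructor
  · have hx : ∑ j, x j - x i ≤ eSum x (n - 1) := by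
      rw [← Finset.sum_erase_eq_sub (Finset.mem_univ i)]
      simpa using sum_le_eSum x (Finset.univ.erase i)
    have hy : eSum y (n - 1) ≤ ∑ j, y j - m := by
      simpa [Nat.sub_sub_self hn] using
        eSum_le_sum_sub (Nat.sub_le n 1) fun j => (hy j).1
    linarith [h.1, h.eSum_le_eSum (Nat.sub_le n 1)]
  · calc x i ≤ eSum x 1 := by simpa using sum_le_eSum x {i}
      _ ≤ eSum y 1 := h.eSum_le_eSum hn
      _ ≤ M := by simpa using eSum_le_mul hn fun j => (hy j).2

lemma maj_of_mem_Icc {m M : ℝ} (hsum : ∑ i, x i = ∑ i, y i) (hx : ∀ i, x i ∈ Icc m M)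
    (hy : ∀ l, 0 < l → l ≤ n →
      (∀ i : Fin n, (i : ℕ) < l → M ≤ y i) ∨ ∀ i : Fin n, l ≤ (i : ℕ) → y i ≤ m) :
    Maj x y := by
  refine ⟨hsum, fun l hl hln => ?_⟩
  have hs := card_initialIndices hln
  suffices h : eSum x l ≤ ∑ i ∈ initialIndices n l, y i from
    h.trans (by simpa only [hs] using sum_le_eSum y (initialIndices n l))
  rcases hy l hl hln with hM | hm
  · calc eSum x l ≤ l * M := eSum_le_mul hln fun i => (hx i).2
      _ ≤ ∑ i ∈ initialIndices n l, y i := by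
        simpa [hs] using Finset.card_nsmul_le_sum _ y M fun i hi => hM i (mem_initialIndices.1 hi)
  · have htail : ∑ i ∈ (initialIndices n l)ᶜ, y i ≤ (n - l : ℕ) * m := by
      simpa [Finset.card_compl, hs] using
        Finset.sum_le_card_nsmul (initialIndices n l)ᶜ y m fun i hi =>
          hm i (by simpa [mem_initialIndices] using hi)
    linarith [Finset.sum_add_sum_compl (initialIndices n l) y,
      eSum_le_sum_sub hln fun i => (hx i).1]

end Majorization

section FiberAverage

variable {ι ι' κ : Type*} {π : ι → κ} {x y : ι → ℝ}

lemma posPart_sum_le (s : Finset ι) (f : ι → ℝ) : (∑ i ∈ s, f i)⁺ ≤ ∑ i ∈ s, (f i)⁺ :=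
  sup_le (Finset.sum_le_sum fun i _ => le_posPart (f i))
    (Finset.sum_nonneg fun i _ => posPart_nonneg (f i))

lemma posPart_sum_lt {s : Finset ι} {f : ι → ℝ} {i j : ι} (hi : i ∈ s) (hj : j ∈ s)
    (hfi : f i < 0) (hfj : 0 < f j) : (∑ i ∈ s, f i)⁺ < ∑ i ∈ s, (f i)⁺ :=
  max_lt
    (Finset.sum_lt_sum (fun i _ => le_posPart (f i)) ⟨i, hi, hfi.trans_le (posPart_nonneg _)⟩)
    (Finset.sum_pos' (fun i _ => posPart_nonneg (f i)) ⟨j, hj, posPart_pos hfj⟩)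

/-- `FiberStraddles π y t`: some fiber of `π` carries values of `y` on both sides of `t`. -/
def FiberStraddles (π : ι → κ) (y : ι → ℝ) (t : ℝ) : Prop :=
  ∃ i j, π i = π j ∧ y i < t ∧ t < y j

lemma FiberStraddles.comp_equiv {t : ℝ} (h : FiberStraddles π y t) (e : ι' ≃ ι) :
    FiberStraddles (π ∘ e) (y ∘ e) t := by
  obtain ⟨i, j, hij, hi, hj⟩ := h
  exact ⟨e.symm i, e.symm j, by simpa using hij, by simpa using hi, by simpa using hj⟩

variable [Fintype ι] [Fintype ι'] [DecidableEq κ]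

/-- `IsFiberAverage π x y`: `x` arises from `y` by averaging over the fibers of `π`, expressed by
`x` being constant on each fiber with the same fiber sums as `y`. -/
structure IsFiberAverage (π : ι → κ) (x y : ι → ℝ) : Prop where
  apply_eq : ∀ ⦃i j⦄, π i = π j → x i = x j
  sum_fiber_eq : ∀ p, ∑ i with π i = p, x i = ∑ i with π i = p, y i

namespace IsFiberAverage

lemma comp_equiv (h : IsFiberAverage π x y) (e : ι' ≃ ι) :
    IsFiberAverage (π ∘ e) (x ∘ e) (y ∘ e) where
  apply_eq _ _ hij := h.apply_eq hij
  sum_fiber_eq p := by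
    have := h.sum_fiber_eq p
    simp only [Finset.sum_filter] at this ⊢
    exact (e.sum_comp fun i => if π i = p then x i else 0).trans
      (this.trans (e.sum_comp fun i => if π i = p then y i else 0).symm)

lemma mul_right [DecidableEq ι'] (h : IsFiberAverage π x y) (c : ι' → ℝ) :
    IsFiberAverage (Prod.map π id) (fun p : ι × ι' => x p.1 * c p.2) fun p => y p.1 * c p.2 where
  apply_eq := by
    rintro ⟨i, a⟩ ⟨j, b⟩ hij
    obtain ⟨hπ, rfl : a = b⟩ := Prod.mk.inj hij
    exact congrArg (· * c a) (h.apply_eq hπ)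
  sum_fiber_eq := by
    rintro ⟨p, a⟩
    have hfiber : (Finset.univ.filter fun q : ι × ι' => Prod.map π id q = (p, a)) =
        (Finset.univ.filter fun i => π i = p) ×ˢ {a} := by
      ext q
      simp [Prod.ext_iff, eq_comm]
    simp only [hfiber, Finset.sum_product, Finset.sum_singleton, ← Finset.sum_mul, h.sum_fiber_eq]

lemma prod_apply (h : IsFiberAverage π x y) (k : ℕ) :
    IsFiberAverage (π ∘ ·) (fun f : Fin k → ι => ∏ j, x (f j)) fun f => ∏ j, y (f j) where
  apply_eq _ _ hfg := Finset.prod_congr rfl fun j _ => h.apply_eq (congrFun hfg j)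
  sum_fiber_eq p := by
    have hfiber : (Finset.univ.filter fun f : Fin k → ι => π ∘ f = p) =
        Fintype.piFinset fun j => Finset.univ.filter fun i => π i = p j := by
      ext f
      simp [funext_iff]
    rw [hfiber, ← Finset.prod_univ_sum _ fun _ => x, ← Finset.prod_univ_sum _ fun _ => y]
    simp only [h.sum_fiber_eq]

lemma sum_eq (h : IsFiberAverage π x y) : ∑ i, x i = ∑ i, y i := by
  have hπ : ∀ i ∈ Finset.univ, π i ∈ Finset.univ.image π := fun i => Finset.mem_image_of_mem π
  rw [← Finset.sum_fiberwise_of_maps_to hπ x, ← Finset.sum_fiberwise_of_maps_to hπ y]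
  exact Finset.sum_congr rfl fun p _ => h.sum_fiber_eq p

lemma card_nsmul_apply (h : IsFiberAverage π x y) (i : ι) :
    (Finset.univ.filter fun j => π j = π i).card • x i = ∑ j with π j = π i, y j := by
  rw [← h.sum_fiber_eq, ← Finset.sum_const]
  exact Finset.sum_congr rfl fun j hj => (h.apply_eq (Finset.mem_filter.1 hj).2).symm

lemma apply_lt (h : IsFiberAverage π x y) {i j : ι} {M : ℝ} (hM : ∀ j, π j = π i → y j ≤ M)
    (hij : π j = π i) (hj : y j < M) : x i < M := by
  have hsum := Finset.sum_lt_sum (fun j hj => hM j (Finset.mem_filter.1 hj).2)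
    ⟨j, Finset.mem_filter.2 ⟨Finset.mem_univ _, hij⟩, hj⟩
  rw [← h.card_nsmul_apply, Finset.sum_const] at hsum
  exact lt_of_nsmul_lt_nsmul_right _ hsum

lemma neg (h : IsFiberAverage π x y) : IsFiberAverage π (-x) (-y) where
  apply_eq _ _ hij := congrArg (- ·) (h.apply_eq hij)
  sum_fiber_eq p := by simp [h.sum_fiber_eq p]

lemma lt_apply (h : IsFiberAverage π x y) {i j : ι} {m : ℝ} (hm : ∀ j, π j = π i → m ≤ y j)
    (hij : π j = π i) (hj : m < y j) : m < x i :=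
  neg_lt_neg_iff.1 (h.neg.apply_lt (fun j hj => neg_le_neg (hm j hj)) hij (neg_lt_neg hj))

lemma apply_le (h : IsFiberAverage π x y) {i : ι} {M : ℝ} (hM : ∀ j, π j = π i → y j ≤ M) :
    x i ≤ M :=
  le_of_forall_gt fun _ hM' => h.apply_lt (fun j hj => (hM j hj).trans hM'.le) rfl
    ((hM i rfl).trans_lt hM')

lemma le_apply (h : IsFiberAverage π x y) {i : ι} {m : ℝ} (hm : ∀ j, π j = π i → m ≤ y j) :
    m ≤ x i :=
  neg_le_neg_iff.1 (h.neg.apply_le fun j hj => neg_le_neg (hm j hj))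

lemma mem_Ioo (h : IsFiberAverage π x y) {i j : ι} {m M : ℝ} (hy : ∀ i, y i ∈ Icc m M)
    (hij : π j = π i) (hj : y j ∈ Ioo m M) : x i ∈ Ioo m M :=
  ⟨h.lt_apply (fun j _ => (hy j).1) hij hj.1, h.apply_lt (fun j _ => (hy j).2) hij hj.2⟩

lemma sum_fiber_posPart (h : IsFiberAverage π x y) (p : κ) (t : ℝ) :
    ∑ i with π i = p, (x i - t)⁺ = (∑ i with π i = p, (y i - t))⁺ := by
  have hsum : ∑ i with π i = p, (y i - t) = ∑ i with π i = p, (x i - t) := by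
    simp only [Finset.sum_sub_distrib, h.sum_fiber_eq]
  have hsign : (∀ i, π i = p → 0 ≤ x i - t) ∨ ∀ i, π i = p → x i - t ≤ 0 := by
    by_contra! ⟨⟨i, hi, hit⟩, j, hj, hjt⟩
    linarith [h.apply_eq (hi.trans hj.symm)]
  rw [hsum]
  rcases hsign with hx | hx
  · rw [posPart_eq_self.2 (Finset.sum_nonneg fun i hi => hx i (Finset.mem_filter.1 hi).2)]
    exact Finset.sum_congr rfl fun i hi => posPart_eq_self.2 (hx i (Finset.mem_filter.1 hi).2)
  · rw [posPart_eq_zero.2 (Finset.sum_nonpos fun i hi => hx i (Finset.mem_filter.1 hi).2)]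
    exact Finset.sum_eq_zero fun i hi => posPart_eq_zero.2 (hx i (Finset.mem_filter.1 hi).2)

lemma sum_posPart_lt (h : IsFiberAverage π x y) {t : ℝ} (ht : FiberStraddles π y t) :
    ∑ i, (x i - t)⁺ < ∑ i, (y i - t)⁺ := by
  obtain ⟨i, j, hij, hi, hj⟩ := ht
  have hπ : ∀ i ∈ Finset.univ, π i ∈ Finset.univ.image π := fun i => Finset.mem_image_of_mem π
  rw [← Finset.sum_fiberwise_of_maps_to hπ, ← Finset.sum_fiberwise_of_maps_to hπ]
  simp only [h.sum_fiber_posPart]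
  exact Finset.sum_lt_sum (fun p _ => posPart_sum_le _ _)
    ⟨π j, hπ j (Finset.mem_univ j), posPart_sum_lt (Finset.mem_filter.2 ⟨Finset.mem_univ _, hij⟩)
      (Finset.mem_filter.2 ⟨Finset.mem_univ _, rfl⟩) (sub_neg.2 hi) (sub_pos.2 hj)⟩

end IsFiberAverage

/-- The strict inequalities at thresholds inside `(m, M)` are open conditions; at the remaining
thresholds the bounds `m` and `M` already give the weak inequality. -/
lemma IsFiberAverage.eventually_maj {n : ℕ} {π : Fin n → κ} {x y : Fin n → ℝ} {m M : ℝ}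
    (h : IsFiberAverage π x y) (hy : ∀ i, m ≤ y i) (hπ : ∀ t ∈ Ioo m M, FiberStraddles π y t) :
    ∀ᶠ z in 𝓝 x, ∑ i, z i = ∑ i, y i → (∀ i, z i ∈ Icc m M) → Maj z y := by
  have hlt : ∀ᶠ z in 𝓝 x, ∀ j, y j ∈ Ioo m M →
      ∑ i, (z i - y j)⁺ < ∑ i, (y i - y j)⁺ := by
    refine eventually_all.2 fun j => eventually_imp_distrib_left.2 fun hj => ?_
    have hcont : Continuous fun z : Fin n → ℝ => ∑ i, (z i - y j)⁺ :=
      continuous_finsetSum _ fun i _ =>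
        continuous_posPart.comp ((continuous_apply i).sub continuous_const)
    exact hcont.continuousAt.eventually_lt_const (h.sum_posPart_lt (hπ _ hj))
  filter_upwards [hlt] with z hz hsum hmem
  refine maj_of_sum_posPart_le hsum fun j => ?_
  rcases le_or_gt M (y j) with hM | hM
  · rw [Finset.sum_eq_zero fun i _ => posPart_eq_zero.2 (sub_nonpos.2 ((hmem i).2.trans hM))]
    exact Finset.sum_nonneg fun i _ => posPart_nonneg _
  rcases (hy j).eq_or_lt with hm | hm
  · simp only [← hm, fun i => posPart_eq_self.2 (sub_nonneg.2 (hmem i).1),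
      fun i => posPart_eq_self.2 (sub_nonneg.2 (hy i)), Finset.sum_sub_distrib, hsum, le_refl]
  · exact (hz j ⟨hm, hM⟩).le

end FiberAverage

section Products

variable {n k : ℕ} {x y : Fin n → ℝ}

lemma sum_tensor (x : Fin n → ℝ) (c : Fin k → ℝ) :
    ∑ i, tensor x c i = (∑ i, x i) * ∑ j, c j := by
  rw [Fintype.sum_mul_sum, ← Fintype.sum_prod_type']
  exact finProdFinEquiv.symm.sum_comp fun p : Fin n × Fin k => x p.1 * c p.2

lemma sum_tpow (x : Fin n → ℝ) (k : ℕ) : ∑ i, tpow x k i = (∑ i, x i) ^ k := by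
  rw [Fintype.sum_pow]
  exact finFunctionFinEquiv.symm.sum_comp fun f : Fin k → Fin n => ∏ j, x (f j)

lemma tensor_finProdFinEquiv (x : Fin n → ℝ) (c : Fin k → ℝ) (i : Fin n) (j : Fin k) :
    tensor x c (finProdFinEquiv (i, j)) = x i * c j := by
  simp [tensor]

lemma tpow_finFunctionFinEquiv (x : Fin n → ℝ) (f : Fin k → Fin n) :
    tpow x k (finFunctionFinEquiv f) = ∏ j, x (f j) := by
  simp [tpow]

lemma continuous_tensor (c : Fin k → ℝ) : Continuous fun x : Fin n → ℝ => tensor x c := by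
  unfold tensor
  fun_prop

lemma continuous_tpow (k : ℕ) : Continuous fun x : Fin n → ℝ => tpow x k := by
  unfold tpow
  fun_prop

lemma tensor_smul (a : ℝ) (x : Fin n → ℝ) (c : Fin k → ℝ) : tensor x (a • c) = a • tensor x c := by
  ext i
  simp [tensor, mul_left_comm]

lemma tensor_mem_Icc {c : Fin k → ℝ} {a b a' b' : ℝ} (ha : 0 ≤ a) (ha' : 0 ≤ a')
    (hx : ∀ i, x i ∈ Icc a b) (hc : ∀ j, c j ∈ Icc a' b') (i : Fin (n * k)) :
    tensor x c i ∈ Icc (a * a') (b * b') := by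
  have hxi := hx (finProdFinEquiv.symm i).1
  have hci := hc (finProdFinEquiv.symm i).2
  exact ⟨mul_le_mul hxi.1 hci.1 ha' (ha.trans hxi.1),
    mul_le_mul hxi.2 hci.2 (ha'.trans hci.1) (ha.trans (hxi.1.trans hxi.2))⟩

lemma tpow_mem_Icc {a b : ℝ} (ha : 0 ≤ a) (hx : ∀ i, x i ∈ Icc a b) (i : Fin (n ^ k)) :
    tpow x k i ∈ Icc (a ^ k) (b ^ k) := by
  constructor
  · simpa [tpow] using Finset.prod_le_prod (s := (Finset.univ : Finset (Fin k))) (fun _ _ => ha)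
      fun j _ => (hx (finFunctionFinEquiv.symm i j)).1
  · simpa [tpow] using Finset.prod_le_prod (s := (Finset.univ : Finset (Fin k)))
      (fun j _ => ha.trans (hx (finFunctionFinEquiv.symm i j)).1) fun j _ => (hx _).2

variable {m M : ℝ}

lemma mem_Icc_of_maj_tensor {c : Fin k → ℝ} (hk : 0 < k) (hc : ∀ j, 0 < c j) (hm : 0 ≤ m)
    (hy : ∀ i, y i ∈ Icc m M) (h : Maj (tensor x c) (tensor y c)) (i : Fin n) :
    x i ∈ Icc m M := by
  have : Nonempty (Fin k) := ⟨⟨0, hk⟩⟩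
  obtain ⟨jmin, hmin⟩ := Finite.exists_min c
  obtain ⟨jmax, hmax⟩ := Finite.exists_max c
  have hprod (j : Fin k) : x i * c j ∈ Icc (m * c jmin) (M * c jmax) := by
    rw [← tensor_finProdFinEquiv]
    exact h.mem_Icc (tensor_mem_Icc hm (hc jmin).le hy fun j => ⟨hmin j, hmax j⟩) _
  exact ⟨le_of_mul_le_mul_right (hprod jmin).1 (hc jmin),
    le_of_mul_le_mul_right (hprod jmax).2 (hc jmax)⟩

lemma mem_Icc_of_maj_tpow (hk : k ≠ 0) (hm : 0 ≤ m) (hx : ∀ i, 0 ≤ x i)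
    (hy : ∀ i, y i ∈ Icc m M) (h : Maj (tpow x k) (tpow y k)) (i : Fin n) :
    x i ∈ Icc m M := by
  have hpow : x i ^ k ∈ Icc (m ^ k) (M ^ k) := by
    simpa [tpow_finFunctionFinEquiv] using
      h.mem_Icc (tpow_mem_Icc hm hy) (finFunctionFinEquiv fun _ => i)
  have hM : 0 ≤ M := hm.trans ((hy i).1.trans (hy i).2)
  exact ⟨(pow_le_pow_iff_left₀ hm (hx i) hk).1 hpow.1, (pow_le_pow_iff_left₀ (hx i) hM hk).1 hpow.2⟩

end Products

section Reachable

variable {n : ℕ} {x y : Fin n → ℝ}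

lemma mem_Tinf_of_maj {k : ℕ} {c : Fin k → ℝ} (hx : x ∈ Vn n) (hk : 0 < k) (hc : ∀ j, 0 < c j)
    (hanti : Antitone c) (h : Maj (tensor x c) (tensor y c)) : x ∈ Tinf y := by
  have : Nonempty (Fin k) := ⟨⟨0, hk⟩⟩
  have hsum : 0 < ∑ j, c j := Fintype.sum_pos (Pi.lt_def.2 ⟨fun j => (hc j).le, ⟨0, hk⟩, hc _⟩)
  refine ⟨hx, k, (∑ j, c j)⁻¹ • c, hk, fun j => mul_pos (inv_pos.2 hsum) (hc j), ?_,
    hanti.const_mul (inv_pos.2 hsum).le, ?_⟩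
  · simp [← Finset.mul_sum, hsum.ne']
  · simpa only [tensor_smul] using h.smul (inv_pos.2 hsum).le

lemma Sset_subset_Tinf (y : Fin n → ℝ) : Sset y ⊆ Tinf y := by
  rintro x ⟨hx, h⟩
  refine mem_Tinf_of_maj (c := fun _ : Fin 1 => 1) hx one_pos (fun _ => one_pos) antitone_const ?_
  have htensor (z : Fin n → ℝ) :
      tensor z (fun _ : Fin 1 => 1) = z ∘ finProdFinEquiv.symm.trans (Equiv.prodUnique _ _) := by
    ext i
    simp [tensor]
  simpa only [htensor] using h.comp_equiv _

lemma Sset_subset_Minf (y : Fin n → ℝ) : Sset y ⊆ Minf y := by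
  rintro x ⟨hx, h⟩
  refine ⟨hx, 1, le_rfl, ?_⟩
  have htpow (z : Fin n → ℝ) :
      tpow z 1 = z ∘ finFunctionFinEquiv.symm.trans (Equiv.funUnique _ _) := by
    ext i
    simp [tpow]
  simpa only [htpow] using h.comp_equiv _

lemma mem_Icc_of_mem_Tinf_union_Minf {m M : ℝ} (hm : 0 ≤ m) (hy : ∀ i, y i ∈ Icc m M)
    (hx : x ∈ Tinf y ∪ Minf y) (i : Fin n) : x i ∈ Icc m M := by
  rcases hx with ⟨-, k, c, hk, hc, -, -, h⟩ | ⟨hx, k, hk, h⟩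
  · exact mem_Icc_of_maj_tensor hk hc hm hy h i
  · exact mem_Icc_of_maj_tpow (Nat.one_le_iff_ne_zero.1 hk) hm hx.1 hy h i

end Reachable

section Straddling

lemma exists_mem_Ioo_of_overlap {α : Type*} [LinearOrder α] {a b : ℕ → α} {t : α} {k : ℕ}
    (hab : ∀ i < k, a i < b (i + 1)) (ha : a k < t) (hb : t < b 0) :
    ∃ i ≤ k, t ∈ Ioo (a i) (b i) := by
  induction k with
  | zero => exact ⟨0, le_rfl, ha, hb⟩
  | succ k ih =>
    rcases lt_or_ge (a k) t with hk | hk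
    · obtain ⟨i, hi, ht⟩ := ih (fun i hi => hab i (hi.trans k.lt_succ_self)) hk
      exact ⟨i, hi.trans k.le_succ, ht⟩
    · exact ⟨k + 1, le_rfl, ha, hk.trans_lt (hab k k.lt_succ_self)⟩

lemma prod_ite_val_lt {k i : ℕ} (hi : i ≤ k) (a b : ℝ) :
    ∏ j : Fin k, (if (j : ℕ) < i then a else b) = a ^ i * b ^ (k - i) := by
  have hi' := card_initialIndices hi
  rw [initialIndices] at hi'
  rw [Finset.prod_ite, Finset.prod_const, Finset.prod_const, hi', Finset.filter_not,
    ← Finset.compl_eq_univ_sdiff, Finset.card_compl, hi', Fintype.card_fin]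

lemma exists_common_ratio {p p' q q' : ℝ} (hp' : 0 < p') (hp : p' < p) (hq' : 0 ≤ q')
    (hq : q' < q) : ∃ r ∈ Ioo (0 : ℝ) 1, ∃ K : ℕ, p' < p * r ∧ q' < q * r ∧ p' * r ^ K < q := by
  have hp0 := hp'.trans hp
  have hq0 := hq'.trans_lt hq
  obtain ⟨r, hr, hr1⟩ := exists_between (max_lt ((div_lt_one hp0).2 hp) ((div_lt_one hq0).2 hq))
  obtain ⟨hpr, hqr⟩ := max_lt_iff.1 hr
  obtain ⟨K, hK⟩ := exists_pow_lt_of_lt_one (div_pos hq0 hp') hr1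
  exact ⟨r, ⟨(div_pos hp' hp0).trans hpr, hr1⟩, K, (div_lt_iff₀' hp0).1 hpr,
    (div_lt_iff₀' hq0).1 hqr, (lt_div_iff₀' hp').1 hK⟩

/-- The geometric vector `(1, r, …, r ^ K)`, used as an unnormalized catalyst. -/
def geomVec (r : ℝ) (K : ℕ) : Fin (K + 1) → ℝ := fun j => r ^ (j : ℕ)

lemma geomVec_mem_Icc {r : ℝ} (hr : r ∈ Ioo (0 : ℝ) 1) (K : ℕ) (j : Fin (K + 1)) :
    geomVec r K j ∈ Icc (r ^ K) 1 :=
  ⟨pow_le_pow_of_le_one hr.1.le hr.2.le (Nat.lt_succ_iff.1 j.2), pow_le_one₀ hr.1.le hr.2.le⟩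

variable {n : ℕ} {κ : Type*} {π : Fin n → κ} {x y : Fin n → ℝ}

lemma fiberStraddles_tensor_geomVec {r t : ℝ} {K : ℕ} {p p' : Fin n} (hπ : π p' = π p)
    (hr : 0 < r) (hp : y p' < y p * r) (ht : t ∈ Ioo (y p' * r ^ K) (y p)) :
    FiberStraddles (Prod.map π id ∘ finProdFinEquiv.symm) (tensor y (geomVec r K)) t := by
  obtain ⟨i, hi, hlo, hhi⟩ := exists_mem_Ioo_of_overlap
    (a := fun i => y p' * r ^ i) (b := fun i => y p * r ^ i) (k := K)
    (fun i _ => by rw [pow_succ', ← mul_assoc]; gcongr) ht.1 (by simpa using ht.2)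
  let j : Fin (K + 1) := ⟨i, Nat.lt_succ_iff.2 hi⟩
  exact FiberStraddles.comp_equiv (y := fun i : Fin n × Fin (K + 1) => y i.1 * geomVec r K i.2)
    ⟨(p', j), (p, j), Prod.ext hπ rfl, hlo, hhi⟩ _

lemma fiberStraddles_tpow {r t : ℝ} {K : ℕ} {p p' q q' : Fin n}
    (hπp : π p' = π p) (hπq : π q' = π q) (hr : 0 < r) (hp' : 0 < y p') (hq' : 0 ≤ y q')
    (hp : y p' < y p * r) (hq : y q' < y q * r) (hpq : y p' * r ^ K < y q)
    (ht : t ∈ Ioo (y q' ^ (K + 1)) (y p ^ (K + 1))) :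
    FiberStraddles ((π ∘ ·) ∘ finFunctionFinEquiv.symm) (tpow y (K + 1)) t := by
  have hp0 : 0 < y p := pos_of_mul_pos_left (hp'.trans hp) hr.le
  have hq0 : 0 < y q := pos_of_mul_pos_left (hq'.trans_lt hq) hr.le
  have hoverlap : ∀ i < K + 1,
      y q' ^ i * y p' ^ (K + 1 - i) < y q ^ (i + 1) * y p ^ (K + 1 - (i + 1)) := by
    intro i hi
    obtain ⟨m, rfl⟩ := Nat.exists_eq_add_of_le (Nat.lt_succ_iff.1 hi)
    rw [show i + m + 1 - i = m + 1 by omega, show i + m + 1 - (i + 1) = m by omega]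
    calc y q' ^ i * y p' ^ (m + 1) = y q' ^ i * (y p' ^ m * y p') := by rw [pow_succ]
      _ ≤ (y q * r) ^ i * ((y p * r) ^ m * y p') := by gcongr
      _ = y q ^ i * y p ^ m * (y p' * r ^ (i + m)) := by ring
      _ < y q ^ i * y p ^ m * y q := by gcongr
      _ = y q ^ (i + 1) * y p ^ m := by ring
  obtain ⟨i, hi, hlo, hhi⟩ := exists_mem_Ioo_of_overlap
    (a := fun i => y q' ^ i * y p' ^ (K + 1 - i)) (b := fun i => y q ^ i * y p ^ (K + 1 - i))
    hoverlap (by simpa using ht.1) (by simpa using ht.2)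
  have hprod (a b : Fin n) : ∏ j : Fin (K + 1), y (if (j : ℕ) < i then a else b) =
      y a ^ i * y b ^ (K + 1 - i) := by
    simp only [apply_ite y, prod_ite_val_lt hi]
  refine FiberStraddles.comp_equiv (y := fun f : Fin (K + 1) → Fin n => ∏ j, y (f j))
    ⟨fun j => if (j : ℕ) < i then q' else p', fun j => if (j : ℕ) < i then q else p, ?_, ?_, ?_⟩ _
  · ext j
    simp only [Function.comp_apply]
    split_ifs <;> assumption
  · simpa only [hprod] using hlo
  · simpa only [hprod] using hhi

end Straddling

section Reaching

variable {n : ℕ} {κ : Type*} [DecidableEq κ] {π : Fin n → κ} {x y : Fin n → ℝ} {p p' q q' : Fin n}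

lemma IsFiberAverage.exists_eventually_maj_tensor (h : IsFiberAverage π x y) (hπp : π p' = π p)
    (hπq : π q' = π q) (hp' : 0 < y p') (hp : y p' < y p) (hq' : 0 ≤ y q') (hq : y q' < y q)
    (hy : ∀ i, y i ∈ Icc (y q') (y p)) :
    ∃ (k : ℕ) (c : Fin k → ℝ), 0 < k ∧ (∀ j, 0 < c j) ∧ Antitone c ∧
      ∀ᶠ z in 𝓝 x, ∑ i, z i = ∑ i, y i → (∀ i, z i ∈ Icc (y q') (y p)) →
        Maj (tensor z c) (tensor y c) := by
  obtain ⟨r, hr, K, hpr, hqr, hpq⟩ := exists_common_ratio hp' hp hq' hq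
  have hc := geomVec_mem_Icc hr K
  have hrK : 0 < r ^ K := pow_pos hr.1 K
  have hstraddle : ∀ t ∈ Ioo (y q' * r ^ K) (y p),
      FiberStraddles (Prod.map π id ∘ finProdFinEquiv.symm) (tensor y (geomVec r K)) t := by
    intro t ht
    rcases lt_or_ge (y p' * r ^ K) t with hpt | hpt
    · exact fiberStraddles_tensor_geomVec hπp hr.1 hpr ⟨hpt, ht.2⟩
    · exact fiberStraddles_tensor_geomVec hπq hr.1 hqr ⟨ht.1, hpt.trans_lt hpq⟩
  refine ⟨K + 1, geomVec r K, K.succ_pos, fun j => hrK.trans_le (hc j).1,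
    fun i j hij => pow_le_pow_of_le_one hr.1.le hr.2.le hij, ?_⟩
  have hmaj := ((h.mul_right (geomVec r K)).comp_equiv finProdFinEquiv.symm).eventually_maj
    (fun i => (tensor_mem_Icc hq' hrK.le hy hc i).1) hstraddle
  filter_upwards [(continuous_tensor _).continuousAt.eventually hmaj] with z hz hsum hmem
  refine hz ((sum_tensor z _).trans (hsum ▸ (sum_tensor y _).symm)) fun i => ?_
  simpa using tensor_mem_Icc hq' hrK.le hmem hc i

lemma IsFiberAverage.exists_eventually_maj_tpow (h : IsFiberAverage π x y) (hπp : π p' = π p)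
    (hπq : π q' = π q) (hp' : 0 < y p') (hp : y p' < y p) (hq' : 0 ≤ y q') (hq : y q' < y q)
    (hy : ∀ i, y i ∈ Icc (y q') (y p)) :
    ∃ k, 1 ≤ k ∧ ∀ᶠ z in 𝓝 x, ∑ i, z i = ∑ i, y i → (∀ i, z i ∈ Icc (y q') (y p)) →
      Maj (tpow z k) (tpow y k) := by
  obtain ⟨r, hr, K, hpr, hqr, hpq⟩ := exists_common_ratio hp' hp hq' hq
  refine ⟨K + 1, K.succ_pos, ?_⟩
  have hmaj := ((h.prod_apply (K + 1)).comp_equiv finFunctionFinEquiv.symm).eventually_maj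
    (fun i => (tpow_mem_Icc hq' hy i).1)
    (fun t => fiberStraddles_tpow hπp hπq hr.1 hp' hq' hpr hqr hpq)
  filter_upwards [(continuous_tpow (K + 1)).continuousAt.eventually hmaj] with z hz hsum hmem
  exact hz ((sum_tpow z _).trans (hsum ▸ (sum_tpow y _).symm)) (tpow_mem_Icc hq' hmem)

lemma IsFiberAverage.eventually_mem_Tinf_inter_Minf (h : IsFiberAverage π x y)
    (hπp : π p' = π p) (hπq : π q' = π q) (hp' : 0 < y p') (hp : y p' < y p) (hq : y q' < y q)
    (hyV : y ∈ Vn n) (hy : ∀ i, y i ∈ Icc (y q') (y p)) (hx : ∀ i, x i ∈ Ioo (y q') (y p)) :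
    ∀ᶠ z in 𝓝 x, ∑ i, z i = 1 → Antitone z → z ∈ Tinf y ∩ Minf y := by
  have hq' := hyV.1 q'
  obtain ⟨k, c, hk, hc, hanti, hT⟩ := h.exists_eventually_maj_tensor hπp hπq hp' hp hq' hq hy
  obtain ⟨k', hk', hM⟩ := h.exists_eventually_maj_tpow hπp hπq hp' hp hq' hq hy
  have hbounds : ∀ᶠ z in 𝓝 x, ∀ i, z i ∈ Ioo (y q') (y p) := eventually_all.2 fun i =>
    (continuous_apply i).continuousAt.eventually (isOpen_Ioo.mem_nhds (hx i))
  filter_upwards [hT, hM, hbounds] with z hTz hMz hz hsum hzanti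
  have hzIcc i := Set.Ioo_subset_Icc_self (hz i)
  have hzV : z ∈ Vn n := ⟨fun i => hq'.trans (hzIcc i).1, hsum, hzanti⟩
  have hsumy : ∑ i, z i = ∑ i, y i := hsum.trans hyV.2.1.symm
  exact ⟨mem_Tinf_of_maj hzV hk hc hanti (hTz hsumy hzIcc), hzV, k', hk', hMz hsumy hzIcc⟩

end Reaching

section BlockAverage

variable {n d : ℕ} {y : Fin n → ℝ}

lemma sum_initialIndices_yvec (hy : y ∈ Vn n) (hd : 0 < d) (hdn : d ≤ n) :
    ∑ i ∈ initialIndices n d, yvec y d i = ∑ i ∈ initialIndices n d, y i := by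
  have hd0 : (d : ℝ) ≠ 0 := by positivity
  calc ∑ i ∈ initialIndices n d, yvec y d i = ∑ _i ∈ initialIndices n d, eSum y d / d :=
        Finset.sum_congr rfl fun i hi => if_pos (mem_initialIndices.1 hi)
    _ = eSum y d := by simp [card_initialIndices hdn, mul_div_cancel₀ _ hd0]
    _ = ∑ i ∈ initialIndices n d, y i := (sum_initialIndices_eq_eSum hy.2.2 hd hdn).symm

lemma sum_compl_initialIndices_yvec (hy : y ∈ Vn n) (hd : 0 < d) (hdn : d < n) :
    ∑ i ∈ (initialIndices n d)ᶜ, yvec y d i = ∑ i ∈ (initialIndices n d)ᶜ, y i := by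
  have hnd : (n - d : ℝ) ≠ 0 := sub_ne_zero.2 (by exact_mod_cast hdn.ne')
  calc ∑ i ∈ (initialIndices n d)ᶜ, yvec y d i
      = ∑ _i ∈ (initialIndices n d)ᶜ, (1 - eSum y d) / (n - d) :=
        Finset.sum_congr rfl fun i hi => if_neg (by simpa [mem_initialIndices] using hi)
    _ = 1 - eSum y d := by
      simp [Finset.card_compl, card_initialIndices hdn.le, Nat.cast_sub hdn.le,
        mul_div_cancel₀ _ hnd]
    _ = ∑ i ∈ (initialIndices n d)ᶜ, y i := by
      rw [← hy.2.1, ← sum_initialIndices_eq_eSum hy.2.2 hd hdn.le, sub_eq_iff_eq_add']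
      exact (Finset.sum_add_sum_compl (initialIndices n d) y).symm

lemma isFiberAverage_yvec (hy : y ∈ Vn n) (hd : 0 < d) (hdn : d < n) :
    IsFiberAverage (fun i : Fin n => decide ((i : ℕ) < d)) (yvec y d) y where
  apply_eq i j hij := by
    rw [decide_eq_decide] at hij
    simp only [yvec, hij]
  sum_fiber_eq b := by
    cases b with
    | true => simpa [initialIndices] using sum_initialIndices_yvec hy hd hdn.le
    | false =>
      simpa [initialIndices, Finset.compl_filter] using sum_compl_initialIndices_yvec hy hd hdn

lemma antitone_yvec (hy : y ∈ Vn n) (hd : 0 < d) (hdn : d < n) : Antitone (yvec y d) := by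
  have h := isFiberAverage_yvec hy hd hdn
  intro i j hij
  by_cases hblock : (i : ℕ) < d ↔ (j : ℕ) < d
  · exact (h.apply_eq (decide_eq_decide.2 hblock)).ge
  obtain ⟨hi, hj⟩ : (i : ℕ) < d ∧ d ≤ (j : ℕ) := by
    have : (i : ℕ) ≤ j := hij
    omega
  calc yvec y d j ≤ y ⟨d, hdn⟩ := h.apply_le fun k hk => hy.2.2 (Fin.le_def.2 ?_)
    _ ≤ yvec y d i := h.le_apply fun k hk => hy.2.2 (Fin.le_def.2 ?_)
  all_goals
    simp only [decide_eq_decide] at hk ⊢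
    omega

/-- The vector `x` with mass `ε` moved from component `j` to component `i`. -/
def transfer {ι : Type*} [DecidableEq ι] (x : ι → ℝ) (i j : ι) (ε : ℝ) : ι → ℝ :=
  x + Pi.single i ε - Pi.single j ε

lemma sum_transfer {ι : Type*} [DecidableEq ι] [Fintype ι] (x : ι → ℝ) (i j : ι) (ε : ℝ) :
    ∑ k, transfer x i j ε k = ∑ k, x k := by
  simp [transfer, Finset.sum_add_distrib]

lemma tendsto_transfer {ι : Type*} [DecidableEq ι] (x : ι → ℝ) (i j : ι) :
    Tendsto (transfer x i j) (𝓝 0) (𝓝 x) := by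
  have hsingle (k : ι) : Continuous fun a : ℝ => (Pi.single k a : ι → ℝ) :=
    continuous_const.update k continuous_id
  have hcont : Continuous (transfer x i j) := (continuous_const.add (hsingle i)).sub (hsingle j)
  simpa [transfer] using hcont.tendsto 0

lemma antitone_transfer {ι : Type*} [DecidableEq ι] [PartialOrder ι] {x : ι → ℝ} {i j : ι} {ε : ℝ}
    (hx : Antitone x) (hi : IsBot i) (hj : IsTop j) (hε : 0 ≤ ε) :
    Antitone (transfer x i j ε) := by
  intro k l hkl
  have hsingle (i : ι) : 0 ≤ (Pi.single i ε : ι → ℝ) := Pi.single_nonneg.2 hε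
  have hfirst : (Pi.single i ε : ι → ℝ) l ≤ (Pi.single i ε : ι → ℝ) k := by
    by_cases hl : l = i
    · rw [(hkl.trans hl.le).antisymm (hi k), hl]
    · simpa [hl] using hsingle i k
  have hlast : (Pi.single j ε : ι → ℝ) k ≤ (Pi.single j ε : ι → ℝ) l := by
    by_cases hk : k = j
    · rw [(hj l).antisymm (hk.ge.trans hkl), hk]
    · simpa [hk] using hsingle j l
  simp only [transfer, Pi.add_apply, Pi.sub_apply]
  linarith [hx hkl]

end BlockAverage

section Characterization

variable {n d : ℕ} {y : Fin n → ℝ}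

lemma not_maj_of_eSum_lt_sum {x : Fin n → ℝ} {s : Finset (Fin n)}
    (h : eSum y s.card < ∑ i ∈ s, x i) : ¬ Maj x y := fun hmaj =>
  h.not_ge ((sum_le_eSum x s).trans (hmaj.eSum_le_eSum (by simpa using s.card_le_univ)))

lemma not_maj_transfer_yvec (hy : y ∈ Vn n) (hd : 0 < d) (hdn : d ≤ n) {i j : Fin n}
    (hi : (i : ℕ) < d) (hj : d ≤ (j : ℕ)) {ε : ℝ} (hε : 0 < ε) :
    ¬ Maj (transfer (yvec y d) i j ε) y := by
  have hsum : ∑ k ∈ initialIndices n d, yvec y d k = eSum y d :=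
    (sum_initialIndices_yvec hy hd hdn).trans (sum_initialIndices_eq_eSum hy.2.2 hd hdn)
  refine not_maj_of_eSum_lt_sum (s := initialIndices n d) ?_
  rw [card_initialIndices hdn]
  simp [transfer, Finset.sum_add_distrib, hsum, mem_initialIndices, hi, hj.not_gt, hε]

lemma mem_Icc_of_antitone (hn : 0 < n) (hy : Antitone y) (i : Fin n) :
    y i ∈ Icc (y ⟨n - 1, by omega⟩) (y ⟨0, hn⟩) :=
  ⟨hy (Fin.le_def.2 (by simp only; omega)), hy (Fin.le_def.2 i.val.zero_le)⟩

lemma exists_mem_of_gap (hy : y ∈ Vn n) (hd : 0 < d) (hdn : d < n)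
    (hfirst : y ⟨d - 1, by omega⟩ ≠ y ⟨0, by omega⟩)
    (hlast : y ⟨d, hdn⟩ ≠ y ⟨n - 1, by omega⟩) : ∃ x ∈ Tinf y ∩ Minf y, x ∉ Sset y := by
  let p : Fin n := ⟨0, by omega⟩
  let p' : Fin n := ⟨d - 1, by omega⟩
  let q : Fin n := ⟨d, hdn⟩
  let q' : Fin n := ⟨n - 1, by omega⟩
  have hbounds : ∀ i, y i ∈ Icc (y q') (y p) := mem_Icc_of_antitone p.pos hy.2.2
  have hp : y p' < y p := (hbounds p').2.lt_of_ne hfirst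
  have hq : y q' < y q := (hbounds q).1.lt_of_ne hlast.symm
  have hqp : y q ≤ y p' := hy.2.2 (Fin.le_def.2 (Nat.sub_le d 1))
  have hp' : 0 < y p' := (hy.1 q').trans_lt (hq.trans_le hqp)
  have havg := isFiberAverage_yvec hy hd hdn
  have hyvec (i : Fin n) : yvec y d i ∈ Ioo (y q') (y p) := by
    rcases lt_or_ge (i : ℕ) d with hi | hi
    · exact havg.mem_Ioo hbounds (j := p') (by simp [p', hd, hi]) ⟨hq.trans_le hqp, hp⟩
    · exact havg.mem_Ioo hbounds (j := q) (by simp [q, hi]) ⟨hq, hqp.trans_lt hp⟩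
  have hmem := havg.eventually_mem_Tinf_inter_Minf (p := p) (p' := p') (q := q) (q' := q')
    (by simp [p, p', hd]) (by simp only [q, q', decide_eq_decide]; omega) hp' hp hq hy hbounds hyvec
  have hlim : Tendsto (transfer (yvec y d) p q') (𝓝[>] 0) (𝓝 (yvec y d)) :=
    (tendsto_transfer _ p q').mono_left nhdsWithin_le_nhds
  obtain ⟨ε, hmemε, hε : 0 < ε⟩ := ((hlim.eventually hmem).and self_mem_nhdsWithin).exists
  have hsum : ∑ i, transfer (yvec y d) p q' ε i = 1 :=
    (sum_transfer _ p q' ε).trans (havg.sum_eq.trans hy.2.1)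
  have hanti : Antitone (transfer (yvec y d) p q' ε) :=
    antitone_transfer (antitone_yvec hy hd hdn) (fun i => Fin.le_def.2 i.val.zero_le)
      (fun i => Fin.le_def.2 (Nat.le_sub_one_of_lt i.2)) hε.le
  exact ⟨_, hmemε hsum hanti,
    fun h => not_maj_transfer_yvec hy hd hdn.le hd (Nat.le_sub_one_of_lt hdn) hε h.2⟩

/-- Condition (3) of the theorem, with indices starting from `0`. For a non-increasing `y` it says
that cutting `y` into two parts of at least two components each leaves one part constant. -/
def EveryInnerCutConstant (y : Fin n → ℝ) : Prop :=
  ∀ (d : ℕ) (_ : 2 ≤ d) (_ : d + 2 ≤ n),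
    y ⟨d - 1, by omega⟩ = y ⟨0, by omega⟩ ∨ y ⟨d, by omega⟩ = y ⟨n - 1, by omega⟩

lemma EveryInnerCutConstant.maj (h : EveryInnerCutConstant y) (hy : Antitone y) (hn : 0 < n)
    {x : Fin n → ℝ} (hsum : ∑ i, x i = ∑ i, y i)
    (hx : ∀ i, x i ∈ Icc (y ⟨n - 1, by omega⟩) (y ⟨0, hn⟩)) : Maj x y := by
  refine maj_of_mem_Icc hsum hx fun l hl hln => ?_
  by_cases hl1 : l = 1
  · exact .inl fun i hi => hy (Fin.le_def.2 (by simp only; omega))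
  by_cases hln' : l + 2 ≤ n
  · refine (h l (by omega) hln').imp (fun heq i hi => ?_) fun heq i hi => ?_
    · exact heq.ge.trans (hy (Fin.le_def.2 (by simp only; omega)))
    · exact (hy (Fin.le_def.2 hi)).trans heq.le
  · exact .inr fun i hi => hy (Fin.le_def.2 (by simp only; omega))

lemma eq_Sset_iff (hy : y ∈ Vn n) {A : Set (Fin n → ℝ)} (hA : Tinf y ∩ Minf y ⊆ A)
    (hA' : A ⊆ Tinf y ∪ Minf y) : A = Sset y ↔ EveryInnerCutConstant y := by
  constructor
  · rintro rfl d hd hdn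
    by_contra! ⟨hfirst, hlast⟩
    obtain ⟨x, hx, hxS⟩ := exists_mem_of_gap hy (by omega) (by omega) hfirst hlast
    exact hxS (hA hx)
  · intro h
    refine Set.Subset.antisymm (fun x hx => ?_)
      fun x hx => hA ⟨Sset_subset_Tinf y hx, Sset_subset_Minf y hx⟩
    have hxV : x ∈ Vn n := (hA' hx).elim And.left And.left
    have hn : 0 < n := Nat.pos_of_ne_zero (by rintro rfl; simpa using hy.2.1)
    exact ⟨hxV, h.maj hy.2.2 hn (hxV.2.1.trans hy.2.1.symm)
      (mem_Icc_of_mem_Tinf_union_Minf (hy.1 _) (mem_Icc_of_antitone hn hy.2.2) (hA' hx))⟩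

theorem stmt5_general {n : ℕ} (y : Fin n → ℝ) (hy : y ∈ Vn n) :
    (Tinf y = Sset y ↔ Minf y = Sset y) ∧ (Tinf y = Sset y ↔ EveryInnerCutConstant y) := by
  have hT := eq_Sset_iff hy Set.inter_subset_left Set.subset_union_left
  have hM := eq_Sset_iff hy Set.inter_subset_right Set.subset_union_right
  exact ⟨hT.trans hM.symm, hT⟩

end Characterization

/-- Theorem 6 of the paper. The equivalence of
`T(y) = S(y)`, `M(y) = S(y)`, and the condition `y_d = y_1` or `y_{d+1} = y_n`
for every `1 < d < n-1` (1-based indices in the informal statement). -/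
theorem stmt5 {n : ℕ} (y : Fin n → ℝ) (hy : y ∈ Vn n) (hypos : ∀ i, 0 < y i) :
    (Tinf y = Sset y ↔ Minf y = Sset y) ∧
    (Tinf y = Sset y ↔ ∀ (d : ℕ) (hd1 : 1 < d) (hd2 : d + 1 < n),
      y ⟨d - 1, by omega⟩ = y ⟨0, by omega⟩ ∨
      y ⟨d, by omega⟩ = y ⟨n - 1, by omega⟩) := by
  exact stmt5_general y hy

end
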